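/- Fix integers n ≥ 2 and t ≥ 0. The number of weak compositions j = (j_0, …, j_{n−1}) of binom(n,2) such that j dominates δ = (n−1, n−2, …, 1, 0) (i.e., ∑_{i=0}^{k} j_i ≥ ∑_{i=0}^{k} (n−1−i) for every 0 ≤ k ≤ n−1), j_0 ≤ t + n − 1, and j_i ≤ n − 1 − i for every 1 ≤ i ≤ n−1, equals the number of permutations of {1, …, n−1} having at most t inversions. In particular this number equals (n−1)! whenever t ≥ binom(n−1,2). -/

import Mathlib

/-- A weak composition `j = (j_0,…,j_{n−1})` of `C(n,2)` which dominates
`δ = (n−1,…,1,0)` and satisfies `j_0 ≤ t + n − 1` and `j_i ≤ n − 1 − i` for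
`1 ≤ i ≤ n−1`. -/
def GoodComp (n t : ℕ) (j : Fin n → ℕ) : Prop :=
  (∑ i, j i = Nat.choose n 2) ∧
  (∀ k : Fin n,
    (∑ i : Fin n, if i ≤ k then (n - 1 - (i : ℕ)) else 0) ≤
      ∑ i : Fin n, if i ≤ k then j i else 0) ∧
  (∀ i : Fin n, (i : ℕ) = 0 → j i ≤ t + n - 1) ∧
  (∀ i : Fin n, 1 ≤ (i : ℕ) → j i ≤ n - 1 - (i : ℕ))

/-- The Lehmer code entry of `w` at `i`. -/
def lehmerEntry {m : ℕ} (w : Equiv.Perm (Fin m)) (i : Fin m) : ℕ :=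
  (Finset.univ.filter fun k : Fin m => i < k ∧ w k < w i).card

theorem lehmerEntry_lt {m : ℕ} (w : Equiv.Perm (Fin m)) (i : Fin m) :
    lehmerEntry w i < m - (i : ℕ) := by
  have h : lehmerEntry w i ≤ (Finset.Ioi i).card := by
    apply Finset.card_le_card
    intro k hk
    simp only [Finset.mem_filter, Finset.mem_univ, true_and] at hk
    simpa using hk.1
  rw [Fin.card_Ioi] at h
  have := i.isLt
  omega

theorem sum_lehmerEntry {m : ℕ} (w : Equiv.Perm (Fin m)) :
    ∑ i, lehmerEntry w i = (Finset.univ.filter fun p : Fin m × Fin m =>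
          p.1 < p.2 ∧ w p.2 < w p.1).card := by
  simp only [lehmerEntry, Finset.card_filter]
  rw [Fintype.sum_prod_type]

theorem lehmerEntry_lt_of_lt {m : ℕ} (w w' : Equiv.Perm (Fin m)) (i : Fin m)
    (hagree : ∀ k < i, w k = w' k) (h : w i < w' i) :
    lehmerEntry w i < lehmerEntry w' i := by
  have key : ∀ k, i ≤ k → i ≤ w'.symm (w k) := by
    intro k hk
    by_contra hlt
    push Not at hlt
    have h1 := hagree _ hlt
    rw [Equiv.apply_symm_apply] at h1
    have h2 := w.injective h1
    rw [h2] at hlt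
    exact absurd hk (not_le.mpr hlt)
  have hne : ∀ k, w k < w' i → i ≠ w'.symm (w k) := by
    intro k hk he
    rw [he, Equiv.apply_symm_apply] at hk
    exact lt_irrefl _ hk
  have h3 : (insert i (Finset.univ.filter fun k : Fin m => i < k ∧ w k < w i)).card ≤
      lehmerEntry w' i := by
    apply Finset.card_le_card_of_injOn (fun k => w'.symm (w k))
    · intro k hk
      have hk' : i ≤ k ∧ w k < w' i := by
        simp only [Finset.coe_insert, Set.mem_insert_iff, Finset.mem_coe, Finset.mem_filter,
          Finset.mem_univ, true_and] at hk
        rcases hk with rfl | hk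
        · exact ⟨le_rfl, h⟩
        · exact ⟨hk.1.le, hk.2.trans h⟩
      simp only [Finset.coe_filter, Finset.mem_univ, true_and, Set.mem_ofPred_eq,
        Equiv.apply_symm_apply]
      exact ⟨lt_of_le_of_ne (key k hk'.1) (hne k hk'.2), hk'.2⟩
    · intro a _ b _ hab
      exact w.injective (w'.symm.injective hab)
  rw [Finset.card_insert_of_notMem (by simp)] at h3
  exact h3

/-- The Lehmer code. -/
def lehmerCode {m : ℕ} (w : Equiv.Perm (Fin m)) : (i : Fin m) → Fin (m - (i : ℕ)) :=
  fun i => ⟨lehmerEntry w i, lehmerEntry_lt w i⟩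

theorem lehmerCode_injective {m : ℕ} : Function.Injective (lehmerCode (m := m)) := by
  intro w w' h
  have he : ∀ i, lehmerEntry w i = lehmerEntry w' i := fun i =>
    congrArg Fin.val (congrFun h i)
  ext1 i
  induction i using WellFoundedLT.induction with
  | ind i ih =>
    rcases lt_trichotomy (w i) (w' i) with hlt | heq | hgt
    · exact absurd (he i) (lehmerEntry_lt_of_lt w w' i ih hlt).ne
    · exact heq
    · exact absurd (he i) (lehmerEntry_lt_of_lt w' w i (fun k hk => (ih k hk).symm) hgt).ne'

theorem lehmerCode_bijective {m : ℕ} : Function.Bijective (lehmerCode (m := m)) := by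
  rw [Fintype.bijective_iff_injective_and_card]
  refine ⟨lehmerCode_injective, ?_⟩
  rw [Fintype.card_perm, Fintype.card_pi]
  simp only [Fintype.card_fin]
  rw [Fin.prod_univ_eq_prod_range (fun i => m - i) m, ← Nat.descFactorial_eq_prod_range,
    Nat.descFactorial_self]

theorem sum_delta (m : ℕ) : ∑ i : Fin m, (m - 1 - (i : ℕ)) = m.choose 2 := by
  rw [Fin.sum_univ_eq_sum_range (fun i => m - 1 - i) m, Finset.sum_range_reflect (fun i => i) m,
    Finset.sum_range_id, Nat.choose_two_right]

theorem sum_sub_add {m : ℕ} (c : Fin m → ℕ) (hc : ∀ i, c i ≤ m - 1 - (i : ℕ)) :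
    ∑ i, c i + ∑ i : Fin m, (m - 1 - (i : ℕ) - c i) = m.choose 2 := by
  rw [← Finset.sum_add_distrib, ← sum_delta]
  exact Finset.sum_congr rfl fun i _ => by have := hc i; omega

theorem choose_succ_two (m : ℕ) : (m + 1).choose 2 = m + m.choose 2 := by
  rw [Nat.choose_succ_succ' m 1, Nat.choose_one_right]

theorem goodComp_tail_le {m t : ℕ} {j : Fin (m + 1) → ℕ} (h : GoodComp (m + 1) t j) (i : Fin m) :
    j i.succ ≤ m - 1 - (i : ℕ) := by
  have := h.2.2.2 i.succ (by simp)
  simp only [Fin.val_succ] at this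
  omega

theorem goodComp_zero {m t : ℕ} {j : Fin (m + 1) → ℕ} (h : GoodComp (m + 1) t j) :
    j 0 = m + ∑ i : Fin m, (m - 1 - (i : ℕ) - j i.succ) := by
  have h1 := h.1
  rw [Fin.sum_univ_succ, choose_succ_two] at h1
  have h2 := sum_sub_add (fun i => j i.succ) (goodComp_tail_le h)
  omega

theorem goodComp_of_code {m t : ℕ} (c : Fin m → ℕ) (hc : ∀ i, c i ≤ m - 1 - (i : ℕ))
    (ht : ∑ i, c i ≤ t) :
    GoodComp (m + 1) t (Fin.cons (m + ∑ i, c i) (fun i : Fin m => m - 1 - (i : ℕ) - c i)) := by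
  refine ⟨?_, ?_, ?_, ?_⟩
  · have := sum_sub_add c hc
    rw [Fin.sum_univ_succ, choose_succ_two]
    simp only [Fin.cons_zero, Fin.cons_succ]
    omega
  · intro k
    rw [Fin.sum_univ_succ, Fin.sum_univ_succ]
    simp only [Fin.cons_zero, Fin.cons_succ, Fin.zero_le, if_true, Fin.val_zero, Fin.val_succ]
    have : ∑ i : Fin m, (if i.succ ≤ k then m + 1 - 1 - ((i : ℕ) + 1) else 0) ≤
        ∑ i, c i + ∑ i : Fin m, (if i.succ ≤ k then m - 1 - (i : ℕ) - c i else 0) := by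
      rw [← Finset.sum_add_distrib]
      apply Finset.sum_le_sum
      intro i _
      split_ifs
      · omega
      · omega
    omega
  · intro i hi
    have : i = 0 := Fin.ext hi
    subst this
    simp only [Fin.cons_zero]
    omega
  · intro i hi
    obtain ⟨k, rfl⟩ := Fin.exists_succ_eq.mpr (show i ≠ 0 by rintro rfl; simp at hi)
    simp only [Fin.cons_succ, Fin.val_succ]
    omega

/-- Good compositions correspond to bounded codes. -/
def goodCompEquiv (m t : ℕ) : {j : Fin (m + 1) → ℕ // GoodComp (m + 1) t j} ≃
    {c : (i : Fin m) → Fin (m - (i : ℕ)) // ∑ i, (c i : ℕ) ≤ t} where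
  toFun j := ⟨fun i => ⟨m - 1 - (i : ℕ) - j.1 i.succ, by have := i.isLt; omega⟩, by
    have h1 := goodComp_zero j.2
    have h2 := j.2.2.2.1 0 rfl
    simp only
    omega⟩
  invFun c := ⟨_, goodComp_of_code (fun i => (c.1 i : ℕ))
    (fun i => by have := (c.1 i).isLt; omega) c.2⟩
  left_inv j := by
    apply Subtype.ext
    funext i
    refine Fin.cases ?_ (fun k => ?_) i
    · simp only [Fin.cons_zero]
      exact (goodComp_zero j.2).symm
    · have := goodComp_tail_le j.2 k
      simp only [Fin.cons_succ]
      omega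
  right_inv c := by
    apply Subtype.ext
    funext i
    apply Fin.ext
    have := (c.1 i).isLt
    simp only [Fin.cons_succ]
    omega

/-- Permutations with few inversions correspond to bounded codes. -/
noncomputable def permEquiv (m t : ℕ) : {w : Equiv.Perm (Fin m) //
        (Finset.univ.filter fun p : Fin m × Fin m =>
          p.1 < p.2 ∧ w p.2 < w p.1).card ≤ t} ≃
    {c : (i : Fin m) → Fin (m - (i : ℕ)) // ∑ i, (c i : ℕ) ≤ t} :=
  (Equiv.ofBijective lehmerCode lehmerCode_bijective).subtypeEquiv fun w => by
    rw [← sum_lehmerEntry]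
    rfl

/-- **Proposition.** For `n ≥ 2` and `t ≥ 0`, the number of weak compositions
`j` of `C(n,2)` dominating `δ = (n−1,…,1,0)` with `j_0 ≤ t+n−1` and
`j_i ≤ n−1−i` for `1 ≤ i ≤ n−1` equals the number of permutations of
`{1,…,n−1}` with at most `t` inversions; in particular, it equals `(n−1)!`
whenever `t ≥ C(n−1,2)`. -/
theorem card_goodComp_eq_card_perms_le_inversions (n t : ℕ) (hn : 2 ≤ n) :
    Nat.card {j : Fin n → ℕ // GoodComp n t j} =
      Nat.card {w : Equiv.Perm (Fin (n - 1)) //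
        (Finset.univ.filter fun p : Fin (n - 1) × Fin (n - 1) =>
          p.1 < p.2 ∧ w p.2 < w p.1).card ≤ t} ∧
    (Nat.choose (n - 1) 2 ≤ t →
      Nat.card {j : Fin n → ℕ // GoodComp n t j} = Nat.factorial (n - 1)) := by
  obtain ⟨m, rfl⟩ : ∃ m, n = m + 1 := ⟨n - 1, by omega⟩
  have h := Nat.card_congr ((goodCompEquiv m t).trans (permEquiv m t).symm)
  refine ⟨h, fun ht => h.trans ?_⟩
  simp only [Nat.add_sub_cancel] at ht ⊢
  have hall : ∀ w : Equiv.Perm (Fin m), (Finset.univ.filter fun p : Fin m × Fin m =>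
      p.1 < p.2 ∧ w p.2 < w p.1).card ≤ t := by
    intro w
    rw [← sum_lehmerEntry]
    refine le_trans ?_ ht
    rw [← sum_delta]
    apply Finset.sum_le_sum
    intro i _
    have := lehmerEntry_lt w i
    omega
  rw [Nat.card_congr (Equiv.subtypeUnivEquiv hall), Nat.card_eq_fintype_card, Fintype.card_perm,
    Fintype.card_fin]
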